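/- The G-invariant 2-forms, i.e., the elements f₁y₂y₃ + f₂y₃y₁ + f₃y₁y₂ of R (fₛ ∈ S) fixed by every g ∈ G, form a free A-module with basis {d₁, d₂, d₃, d₄, d₅, d₆}: every such G-invariant 2-form is uniquely an A-linear combination of d₁,…,d₆. -/

import Mathlib

open Matrix MvPolynomial

set_option synthInstance.maxHeartbeats 1000000
set_option maxHeartbeats 1000000

abbrev F3 : Type := ZMod 3
abbrev G3 : Type := Matrix.SpecialLinearGroup (Fin 2) F3
abbrev S3 : Type := MvPolynomial (Fin 3) F3

/-- The fixed basis `v₁, v₂, v₃` of the traceless `2 × 2` matrices over `𝔽₃`. -/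
def V : Fin 3 → Matrix (Fin 2) (Fin 2) F3 :=
  ![!![0, 1; -1, 0], !![-1, -1; -1, 1], !![1, -1; -1, -1]]

/-- Coordinates of a traceless matrix with respect to the basis `v₁, v₂, v₃`. -/
def coordM : Fin 3 → Matrix (Fin 2) (Fin 2) F3 → F3 :=
  ![fun X => X 1 0 - X 0 1, fun X => X 0 0 - X 0 1 - X 1 0, fun X => -(X 0 0 + X 0 1 + X 1 0)]

/-- Matrix of the (dual) action of `g` on `M*`: `g • x_s = ∑ r, (rep g) s r • x_r`, where
`(rep g) s r = x_s (g⁻¹ • v_r) = coordM s (g⁻¹ vᵣ g)`, coming from `(g • f)(v) = f(g⁻¹ • v)`. -/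
def rep (g : G3) : Matrix (Fin 3) (Fin 3) F3 :=
  Matrix.of fun s r => coordM s ((g⁻¹ : G3) * V r * (g : Matrix (Fin 2) (Fin 2) F3))

/-- The action of `g ∈ SL₂(𝔽₃)` on `S = 𝔽₃[x₁,x₂,x₃]` by algebra automorphisms, given by
substituting `x_s ↦ g • x_s = ∑ r, (rep g) s r • x_r`. -/
noncomputable def actS (g : G3) : S3 →ₐ[F3] S3 :=
  MvPolynomial.aeval fun s => ∑ r : Fin 3, rep g s r • MvPolynomial.X r

noncomputable def a1 : S3 := X 0 ^ 2 + X 1 ^ 2 + X 2 ^ 2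
noncomputable def a2 : S3 := X 0 * X 1 * X 2
noncomputable def a3 : S3 := X 0 ^ 4 + X 1 ^ 4 + X 2 ^ 4
noncomputable def bP : S3 := X 0 ^ 4 * X 1 ^ 2 + X 0 ^ 2 * X 2 ^ 4 + X 1 ^ 4 * X 2 ^ 2
noncomputable def av : Fin 3 → S3 := ![a1, a2, a3]

def tm : G3 := ⟨!![1, 1; 0, 1], by decide⟩
def im : G3 := ⟨!![0, 1; -1, 0], by decide⟩
def jm : G3 := ⟨!![1, -1; -1, -1], by decide⟩

/-- The quaternion subgroup `H = ⟨i, j⟩ ≅ Q₈` of `SL₂(𝔽₃)`. -/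
def H3 : Subgroup G3 := Subgroup.closure {im, jm}

/-- The character with `χ(±e) = χ(±i) = 1` and `χ(±j) = χ(±k) = -1` (its values off the
set `{±e, ±i}` are `-1`; only the restriction to `H` is ever used). -/
def chi (g : G3) : F3 :=
  if (g : Matrix (Fin 2) (Fin 2) F3) = 1 ∨ (g : Matrix (Fin 2) (Fin 2) F3) = -1 ∨
     (g : Matrix (Fin 2) (Fin 2) F3) = (im : Matrix (Fin 2) (Fin 2) F3) ∨
     (g : Matrix (Fin 2) (Fin 2) F3) = -(im : Matrix (Fin 2) (Fin 2) F3) then 1 else -1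

/-- The `𝔽₃`-submodule `S^H_χ` of `χ`-relative `H`-invariants in `S`. -/
noncomputable def relInv : Submodule F3 S3 where
  carrier := {f | ∀ h ∈ H3, actS h f = chi h • f}
  add_mem' := by
    intro f g hf hg h hh
    rw [map_add, hf h hh, hg h hh, smul_add]
  zero_mem' := by
    intro h hh
    rw [map_zero, smul_zero]
  smul_mem' := by
    intro c f hf h hh
    rw [_root_.map_smul, hf h hh, smul_comm]

open TensorProduct

/-- The exterior algebra `Λ(M*)` on `y₁, y₂, y₃` (with `M*` in dual-basis coordinates). -/
abbrev Lam : Type := ExteriorAlgebra F3 (Fin 3 → F3)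

/-- `y_s = dx_s`, the exterior generators. -/
noncomputable def yy (s : Fin 3) : Lam := ExteriorAlgebra.ι F3 (Pi.single s 1)

/-- The linear action of `g` on the coordinate space of `y₁, y₂, y₃`:
`y_s ↦ ∑ r, (rep g) s r • y_r`. -/
noncomputable def repL (g : G3) : (Fin 3 → F3) →ₗ[F3] (Fin 3 → F3) :=
  Matrix.toLin' (rep g)ᵀ

/-- The algebra of differential forms `R = S ⊗ Λ(M*)`: the graded-commutative `𝔽₃`-algebra
generated by the central `x₁, x₂, x₃` and the anticommuting `y₁, y₂, y₃`. -/
abbrev Rf : Type := S3 ⊗[F3] Lam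

/-- The action of `g ∈ SL₂(𝔽₃)` on `R` by ring automorphisms, acting on `x`'s as on `S`
and on `y₁, y₂, y₃` by the same matrices as on `x₁, x₂, x₃`. -/
noncomputable def actR (g : G3) : Rf →ₐ[F3] Rf :=
  Algebra.TensorProduct.map (actS g) (ExteriorAlgebra.map (repL g))

noncomputable def c1 : Rf := X 0 ⊗ₜ[F3] yy 0 + X 1 ⊗ₜ[F3] yy 1 + X 2 ⊗ₜ[F3] yy 2
noncomputable def c2 : Rf :=
  (X 1 * X 2) ⊗ₜ[F3] yy 0 + (X 2 * X 0) ⊗ₜ[F3] yy 1 + (X 0 * X 1) ⊗ₜ[F3] yy 2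
noncomputable def c3 : Rf :=
  (X 0 ^ 3) ⊗ₜ[F3] yy 0 + (X 1 ^ 3) ⊗ₜ[F3] yy 1 + (X 2 ^ 3) ⊗ₜ[F3] yy 2
noncomputable def c4 : Rf :=
  (X 0 * X 1 ^ 2) ⊗ₜ[F3] yy 0 + (X 1 * X 2 ^ 2) ⊗ₜ[F3] yy 1 + (X 2 * X 0 ^ 2) ⊗ₜ[F3] yy 2
noncomputable def c5 : Rf :=
  (X 1 ^ 3 * X 2) ⊗ₜ[F3] yy 0 + (X 2 ^ 3 * X 0) ⊗ₜ[F3] yy 1 + (X 0 ^ 3 * X 1) ⊗ₜ[F3] yy 2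
noncomputable def c6 : Rf :=
  (X 0 ^ 3 * X 1 ^ 2) ⊗ₜ[F3] yy 0 + (X 1 ^ 3 * X 2 ^ 2) ⊗ₜ[F3] yy 1 +
    (X 2 ^ 3 * X 0 ^ 2) ⊗ₜ[F3] yy 2

noncomputable def d1 : Rf :=
  X 0 ⊗ₜ[F3] (yy 1 * yy 2) + X 1 ⊗ₜ[F3] (yy 2 * yy 0) + X 2 ⊗ₜ[F3] (yy 0 * yy 1)
noncomputable def d2 : Rf :=
  (X 1 * X 2) ⊗ₜ[F3] (yy 1 * yy 2) + (X 2 * X 0) ⊗ₜ[F3] (yy 2 * yy 0) +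
    (X 0 * X 1) ⊗ₜ[F3] (yy 0 * yy 1)
noncomputable def d3 : Rf :=
  (X 0 ^ 3) ⊗ₜ[F3] (yy 1 * yy 2) + (X 1 ^ 3) ⊗ₜ[F3] (yy 2 * yy 0) +
    (X 2 ^ 3) ⊗ₜ[F3] (yy 0 * yy 1)
noncomputable def d4 : Rf :=
  (X 0 * X 1 ^ 2) ⊗ₜ[F3] (yy 1 * yy 2) + (X 1 * X 2 ^ 2) ⊗ₜ[F3] (yy 2 * yy 0) +
    (X 2 * X 0 ^ 2) ⊗ₜ[F3] (yy 0 * yy 1)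
noncomputable def d5 : Rf :=
  (X 1 ^ 3 * X 2) ⊗ₜ[F3] (yy 1 * yy 2) + (X 2 ^ 3 * X 0) ⊗ₜ[F3] (yy 2 * yy 0) +
    (X 0 ^ 3 * X 1) ⊗ₜ[F3] (yy 0 * yy 1)
noncomputable def d6 : Rf :=
  (X 0 ^ 3 * X 1 ^ 2) ⊗ₜ[F3] (yy 1 * yy 2) + (X 1 ^ 3 * X 2 ^ 2) ⊗ₜ[F3] (yy 2 * yy 0) +
    (X 2 ^ 3 * X 0 ^ 2) ⊗ₜ[F3] (yy 0 * yy 1)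

/-- The top form `y₁y₂y₃`. -/
noncomputable def y123 : Lam := yy 0 * yy 1 * yy 2

noncomputable def dvec : Fin 6 → Rf := ![d1, d2, d3, d4, d5, d6]

/-- The set of `2`-forms `f₁y₂y₃ + f₂y₃y₁ + f₃y₁y₂` with `fₛ ∈ S`. -/
def twoForms : Set Rf :=
  {z | ∃ f₁ f₂ f₃ : S3, z = f₁ ⊗ₜ[F3] (yy 1 * yy 2) + f₂ ⊗ₜ[F3] (yy 2 * yy 0) +
    f₃ ⊗ₜ[F3] (yy 0 * yy 1)}

/-- `Φ(p₁,…,p₆) = ∑ᵢ pᵢ(a₁,a₂,a₃)·dᵢ`. -/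
noncomputable def Phi11 (p : Fin 6 → MvPolynomial (Fin 3) F3) : Rf :=
  ∑ i : Fin 6, (aeval av (p i) ⊗ₜ[F3] (1 : Lam)) * dvec i

/-!
Every `g ∈ G` acts by a cyclic shift of the coordinates with signs of product `1`, on the `x`'s
and, after the identification `y_{s+1} y_{s+2} ↔ y_s`, on the `2`-forms. Since `t` shifts the
coordinates, an invariant `2`-form is determined by its first coordinate `f`, and invariance under
`i` and `j` says that `f` only involves monomials with `m₂ + m₃` even and `m₁ + m₂` odd, that is,
`f ∈ 𝔽₃[x₁², x₂², x₃²] x₁ ⊕ 𝔽₃[x₁², x₂², x₃²] x₂x₃`.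

Let `L` be the `A`-span of `x₁`, `x₂x₃`, `x₁³`, so that `L + x₂² L` is the `A`-span of the first
coordinates of `d₁, …, d₆`. The squares `x_s²` are the roots of a cubic over `A`; this makes `L`
stable under `x₁²`, and dividing the cubic by `T - x₁²` gives a quadratic equation for `x₂²` which
makes `L + x₂² L` stable under all the `x_s²`. It therefore contains every such `f`.

Elements of `A` are symmetric and those of `L` are fixed by swapping `x₂` and `x₃`. Swapping in
`u + x₂² v = 0` with `u, v ∈ L` yields `(x₂² - x₃²) v = 0`, and a relation over `A` between `x₁`,
`x₂x₃`, `x₁³` becomes, after multiplication by `x₁`, a polynomial of degree at most `2` over `A`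
vanishing at the three elements `x_s²`; both relations are therefore trivial.
-/

section General

variable {σ R : Type*}

theorem algebraicIndependent_of_isAlgebraic_X [Finite σ] [CommRing R] [IsDomain R]
    {v : σ → MvPolynomial σ R}
    (hv : ∀ s, IsAlgebraic (Algebra.adjoin R (Set.range v)) (X s : MvPolynomial σ R)) :
    AlgebraicIndependent R v := by
  have : Algebra.IsAlgebraic (Algebra.adjoin R (Set.range v)) (MvPolynomial σ R) := by
    refine ⟨fun p => ?_⟩
    induction p using MvPolynomial.induction_on with
    | C r => exact isAlgebraic_algebraMap (algebraMap R (Algebra.adjoin R (Set.range v)) r)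
    | add p q hp hq => exact hp.add hq
    | mul_X p s hp => exact hp.mul (hv s)
  exact (Algebra.IsAlgebraic.isTranscendenceBasis_of_lift_le_trdeg_of_finite R v
    (by simp [trdeg_of_isDomain])).1

theorem X_pow_injective [CommSemiring R] [Nontrivial R] {d : ℕ} (hd : d ≠ 0) :
    Function.Injective fun s : σ => (X s : MvPolynomial σ R) ^ d := fun s r h => by
  simp only [X_pow_eq_monomial] at h
  exact Finsupp.single_left_injective hd (monomial_left_injective one_ne_zero h)

/- Permuting the variables turns the one relation into a Vandermonde system. -/
theorem eq_zero_of_sum_isSymmetric_mul_X_pow [CommRing R] [IsDomain R] {n d : ℕ}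
    (e : Fin n ↪ σ) (hd : d ≠ 0) {c : Fin n → MvPolynomial σ R} (hc : ∀ k, (c k).IsSymmetric)
    {s : σ} (h : ∑ k, c k * (X s ^ d) ^ (k : ℕ) = 0) : c = 0 := by
  classical
  refine Matrix.eq_zero_of_forall_index_sum_mul_pow_eq_zero
    ((X_pow_injective hd).comp e.injective) fun j => ?_
  have hswap := congrArg (rename (Equiv.swap s (e j))) h
  simpa only [map_sum, map_mul, map_pow, rename_X, Equiv.swap_apply_left, hc _ _, map_zero,
    Function.comp_apply] using hswap

theorem coeff_aeval_C_mul_X [CommSemiring R] (ε : σ → R) (f : MvPolynomial σ R) (m : σ →₀ ℕ) :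
    coeff m (aeval (fun s => C (ε s) * X s) f) = (m.prod fun s n => ε s ^ n) * coeff m f := by
  classical
  induction f using MvPolynomial.induction_on' with
  | monomial u a =>
    have hu : aeval (fun s => C (ε s) * X s) (monomial u a) =
        C (u.prod fun s n => ε s ^ n) * monomial u a := by
      rw [aeval_monomial, monomial_eq, Finsupp.prod, Finsupp.prod, Finsupp.prod]
      simp only [map_prod, map_pow, mul_pow, Finset.prod_mul_distrib, algebraMap_eq]
      ring
    rw [hu, coeff_C_mul, coeff_monomial]
    split_ifs with hum
    · rw [hum]
    · simp
  | add p q hp hq => rw [map_add, coeff_add, coeff_add, hp, hq, mul_add]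

theorem monomial_eq_expand_mul [CommSemiring R] (n : ℕ) (m : σ →₀ ℕ) (a : R) :
    monomial m a = expand n (monomial (m.mapRange (· / n) (Nat.zero_div n)) a) *
      monomial (m.mapRange (· % n) (Nat.zero_mod n)) 1 := by
  rw [expand_monomial, monomial_mul, mul_one]
  congr 2
  ext s
  simp [Nat.div_add_mod]

/-- The minor in the columns `s`, as a linear functional on the exterior algebra of `R^σ`. -/
noncomputable def exteriorMinor [CommRing R] {n : ℕ} (s : Fin n → σ) :
    ExteriorAlgebra R (σ → R) →ₗ[R] R :=
  ExteriorAlgebra.liftAlternating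
    (Pi.single n (Matrix.detRowAlternating.compLinearMap (LinearMap.funLeft R R s)))

theorem exteriorMinor_ιMulti [CommRing R] {n : ℕ} (s : Fin n → σ) (v : Fin n → σ → R) :
    exteriorMinor s (ExteriorAlgebra.ιMulti R n v) = (Matrix.of fun i j => v i (s j)).det := by
  rw [exteriorMinor, ExteriorAlgebra.liftAlternating_apply_ιMulti, Pi.single_eq_same]
  rfl

end General

/-! ### The action by signed cyclic shifts -/

/-- `g` acts on the coordinates by `x_s ↦ ε_s x_{s+k}`, with signs `ε_s` of product `1`. -/
structure IsSignedShift (g : G3) (k : Fin 3) (ε : Fin 3 → F3) : Prop where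
  prod_eq_one : ∏ s, ε s = 1
  rep_eq : rep g = Matrix.of fun s => Pi.single (s + k) (ε s)

theorem exists_isSignedShift (g : G3) : ∃ k ε, IsSignedShift g k ε := by
  have h : ∀ g : G3, ∃ k : Fin 3, ∃ ε : Fin 3 → F3,
      ∏ s, ε s = 1 ∧ rep g = Matrix.of fun s => Pi.single (s + k) (ε s) := by
    decide +kernel
  obtain ⟨k, ε, hε, hrep⟩ := h g
  exact ⟨k, ε, hε, hrep⟩

theorem isSignedShift_tm : IsSignedShift tm 1 1 :=
  ⟨by decide, by decide⟩

theorem isSignedShift_im : IsSignedShift im 0 ![1, -1, -1] :=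
  ⟨by decide, by decide⟩

theorem isSignedShift_jm : IsSignedShift jm 0 ![-1, -1, 1] :=
  ⟨by decide, by decide⟩

namespace IsSignedShift

variable {g : G3} {k : Fin 3} {ε : Fin 3 → F3}

theorem mul_self (h : IsSignedShift g k ε) (s : Fin 3) : ε s * ε s = 1 :=
  (by decide : ∀ ε : Fin 3 → F3, ∏ s, ε s = 1 → ∀ s, ε s * ε s = 1) ε h.prod_eq_one s

theorem mul_eq (h : IsSignedShift g k ε) (s : Fin 3) : ε (s + 1) * ε (s + 2) = ε s :=
  (by decide : ∀ ε : Fin 3 → F3, ∏ s, ε s = 1 → ∀ s, ε (s + 1) * ε (s + 2) = ε s)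
    ε h.prod_eq_one s

theorem smul_eq_iff {M : Type*} [AddCommGroup M] [Module F3 M] (h : IsSignedShift g k ε)
    (s : Fin 3) {x y : M} : ε s • x = y ↔ x = ε s • y := by
  constructor
  · rintro rfl
    rw [smul_smul, h.mul_self, one_smul]
  · rintro rfl
    rw [smul_smul, h.mul_self, one_smul]

theorem actS_X (h : IsSignedShift g k ε) (s : Fin 3) : actS g (X s) = ε s • X (s + k) := by
  simp [actS, h.rep_eq, Pi.single_apply, ite_smul]

theorem actS_X_sq (h : IsSignedShift g k ε) (s : Fin 3) : actS g (X s ^ 2) = X (s + k) ^ 2 := by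
  rw [map_pow, h.actS_X, smul_pow, sq, h.mul_self, one_smul]

theorem repL_single (h : IsSignedShift g k ε) (s : Fin 3) :
    repL g (Pi.single s 1) = ε s • Pi.single (s + k) 1 := by
  rw [repL, Matrix.toLin'_apply, Matrix.mulVec_single_one, Matrix.col_transpose, h.rep_eq]
  ext r
  simp [Matrix.row, Pi.single_apply]

end IsSignedShift

/-! ### Two-forms and their coordinates -/

/-- The `2`-form `y_{s+1} y_{s+2}`, the Hodge dual of `y_s`. -/
noncomputable def starY (s : Fin 3) : Lam := yy (s + 1) * yy (s + 2)

theorem starY_eq_ιMulti (s : Fin 3) :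
    starY s = ExteriorAlgebra.ιMulti F3 2 ![Pi.single (s + 1) 1, Pi.single (s + 2) 1] := by
  simp [starY, yy, ExteriorAlgebra.ιMulti_apply]

theorem exteriorMinor_starY (s r : Fin 3) :
    exteriorMinor ![s + 1, s + 2] (starY r) = if r = s then (1 : F3) else 0 := by
  rw [starY_eq_ιMulti, exteriorMinor_ιMulti, Matrix.det_fin_two]
  simp only [Matrix.of_apply, Matrix.cons_val_zero, Matrix.cons_val_one, Pi.single_apply]
  decide +revert

/-- The `2`-form with coordinates `f` in the basis `y₂y₃, y₃y₁, y₁y₂`. -/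
noncomputable def twoForm (f : Fin 3 → S3) : Rf := ∑ s, f s ⊗ₜ[F3] starY s

theorem twoForm_eq (f : Fin 3 → S3) : twoForm f =
    f 0 ⊗ₜ[F3] (yy 1 * yy 2) + f 1 ⊗ₜ[F3] (yy 2 * yy 0) + f 2 ⊗ₜ[F3] (yy 0 * yy 1) := by
  rw [twoForm, Fin.sum_univ_three]
  rfl

theorem range_twoForm : Set.range twoForm = twoForms := by
  ext z
  constructor
  · rintro ⟨f, rfl⟩
    exact ⟨f 0, f 1, f 2, twoForm_eq f⟩
  · rintro ⟨f₁, f₂, f₃, rfl⟩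
    exact ⟨![f₁, f₂, f₃], twoForm_eq _⟩

/-- The `S`-coefficient of `y_{s+1} y_{s+2}` in a differential form. -/
noncomputable def twoFormCoord (s : Fin 3) : Rf →ₗ[F3] S3 :=
  (TensorProduct.rid F3 S3).toLinearMap ∘ₗ (exteriorMinor ![s + 1, s + 2]).lTensor S3

theorem twoFormCoord_twoForm (f : Fin 3 → S3) (s : Fin 3) : twoFormCoord s (twoForm f) = f s := by
  simp [twoFormCoord, twoForm, exteriorMinor_starY, ite_smul]

theorem twoForm_injective : Function.Injective twoForm := fun f g h =>
  funext fun s => by rw [← twoFormCoord_twoForm f, h, twoFormCoord_twoForm]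

namespace IsSignedShift

variable {g : G3} {k : Fin 3} {ε : Fin 3 → F3}

theorem map_repL_starY (h : IsSignedShift g k ε) (s : Fin 3) :
    ExteriorAlgebra.map (repL g) (starY s) = ε s • starY (s + k) := by
  simp only [starY, yy, map_mul, ExteriorAlgebra.map_apply_ι, h.repL_single, map_smul,
    smul_mul_smul_comm, h.mul_eq, add_right_comm _ _ k]

theorem actR_twoForm (h : IsSignedShift g k ε) (f : Fin 3 → S3) :
    actR g (twoForm f) = twoForm fun s => ε (s - k) • actS g (f (s - k)) := by
  rw [twoForm, twoForm, ← Equiv.sum_comp (Equiv.addRight k) fun s =>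
    (ε (s - k) • actS g (f (s - k))) ⊗ₜ[F3] starY s]
  simp [actR, h.map_repL_starY, TensorProduct.smul_tmul']

theorem actR_twoForm_eq_self_iff (h : IsSignedShift g k ε) (f : Fin 3 → S3) :
    actR g (twoForm f) = twoForm f ↔ ∀ s, actS g (f s) = ε s • f (s + k) := by
  rw [h.actR_twoForm, twoForm_injective.eq_iff, funext_iff,
    ← (Equiv.addRight k).forall_congr_right]
  simp only [Equiv.coe_addRight, add_sub_cancel_right, h.smul_eq_iff]

end IsSignedShift

theorem twoForm_ext_of_actR_tm {f f' : Fin 3 → S3} (hf : actR tm (twoForm f) = twoForm f)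
    (hf' : actR tm (twoForm f') = twoForm f') (h0 : f 0 = f' 0) : twoForm f = twoForm f' := by
  rw [isSignedShift_tm.actR_twoForm_eq_self_iff] at hf hf'
  have hstep : ∀ s, f s = f' s → f (s + 1) = f' (s + 1) := fun s hs => by
    simpa [hs, hf' s] using (hf s).symm
  refine congrArg twoForm (funext fun s => ?_)
  fin_cases s
  · exact h0
  · exact hstep 0 h0
  · exact hstep 1 (hstep 0 h0)

/-! ### The coefficient ring -/

/-- The coefficient ring `A = 𝔽₃[a₁, a₂, a₃]`. -/
noncomputable abbrev ringA : Subalgebra F3 S3 := Algebra.adjoin F3 (Set.range av)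

theorem av_mem_ringA (i : Fin 3) : av i ∈ ringA := Algebra.subset_adjoin ⟨i, rfl⟩

theorem av_zero_eq_sum : av 0 = ∑ s, (X s ^ 2) ^ 1 := by
  simp only [av, a1, Matrix.cons_val_zero, Fin.sum_univ_three, pow_one]

theorem av_one_eq_prod : av 1 = ∏ s, X s := by
  simp only [av, a2, Matrix.cons_val_one, Matrix.cons_val_zero, Fin.prod_univ_three]

theorem av_two_eq_sum : av 2 = ∑ s, (X s ^ 2) ^ 2 := by
  simp only [av, a3, Matrix.cons_val, Fin.sum_univ_three, ← pow_mul, Nat.reduceMul]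

theorem IsSignedShift.actS_av {g : G3} {k : Fin 3} {ε : Fin 3 → F3} (h : IsSignedShift g k ε)
    (i : Fin 3) : actS g (av i) = av i := by
  have hsum : ∀ n, actS g (∑ s, (X s ^ 2) ^ n) = ∑ s, (X s ^ 2) ^ n := fun n => by
    simp only [map_sum, map_pow _ _ n, h.actS_X_sq]
    exact Equiv.sum_comp (Equiv.addRight k) fun s => ((X s : S3) ^ 2) ^ n
  have hprod : actS g (∏ s, X s) = ∏ s, X s := by
    simp only [map_prod, h.actS_X, Finset.prod_smul, h.prod_eq_one, one_smul]
    exact Equiv.prod_comp (Equiv.addRight k) fun s => (X s : S3)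
  match i with
  | 0 => exact av_zero_eq_sum ▸ hsum 1
  | 1 => exact av_one_eq_prod ▸ hprod
  | 2 => exact av_two_eq_sum ▸ hsum 2

theorem actS_of_mem_ringA (g : G3) {a : S3} (ha : a ∈ ringA) : actS g a = a := by
  obtain ⟨k, ε, h⟩ := exists_isSignedShift g
  have hle : ringA ≤ AlgHom.equalizer (actS g) (AlgHom.id F3 S3) :=
    Algebra.adjoin_le (Set.range_subset_iff.2 h.actS_av)
  exact hle ha

theorem av_isSymmetric (i : Fin 3) : (av i).IsSymmetric := by
  have hsum : ∀ n, (∑ s, (X s ^ 2) ^ n : S3).IsSymmetric := fun n e => by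
    simp only [map_sum, map_pow, rename_X]
    exact Equiv.sum_comp e fun s => ((X s : S3) ^ 2) ^ n
  have hprod : (∏ s, X s : S3).IsSymmetric := fun e => by
    simp only [map_prod, rename_X]
    exact Equiv.prod_comp e fun s => (X s : S3)
  match i with
  | 0 => exact av_zero_eq_sum ▸ hsum 1
  | 1 => exact av_one_eq_prod ▸ hprod
  | 2 => exact av_two_eq_sum ▸ hsum 2

theorem isSymmetric_of_mem_ringA {a : S3} (ha : a ∈ ringA) : a.IsSymmetric := by
  have hle : ringA ≤ symmetricSubalgebra (Fin 3) F3 :=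
    Algebra.adjoin_le (Set.range_subset_iff.2 av_isSymmetric)
  exact hle ha

/-- `a_{i+1}` (as `i` starts from `0`) as an element of `A`. -/
noncomputable def ringAGen (i : Fin 3) : ringA := ⟨av i, av_mem_ringA i⟩

theorem sum_X_sq_mul_X_sq :
    (X 0 ^ 2 * X 1 ^ 2 + X 1 ^ 2 * X 2 ^ 2 + X 2 ^ 2 * X 0 ^ 2 : S3) = a3 - a1 ^ 2 := by
  have h3 : (3 : S3) = 0 := CharP.ofNat_eq_zero S3 3
  rw [a1, a3]
  linear_combination (X 0 ^ 2 * X 1 ^ 2 + X 1 ^ 2 * X 2 ^ 2 + X 2 ^ 2 * X 0 ^ 2) * h3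

theorem X_sq_cubic (s : Fin 3) :
    (X s ^ 2) ^ 3 - a1 * (X s ^ 2) ^ 2 + (a3 - a1 ^ 2) * X s ^ 2 - a2 ^ 2 = 0 := by
  have hprod : ∏ r, (X s ^ 2 - X r ^ 2 : S3) = 0 :=
    Finset.prod_eq_zero (Finset.mem_univ s) (sub_self _)
  rw [← sum_X_sq_mul_X_sq, a1, a2, ← hprod, Fin.prod_univ_three]
  ring

theorem isIntegral_X (s : Fin 3) : IsIntegral ringA (X s : S3) := by
  refine IsIntegral.of_pow (n := 2) two_pos
    ⟨Polynomial.X ^ 3 + (-Polynomial.C (ringAGen 0) * Polynomial.X ^ 2 +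
      Polynomial.C (ringAGen 2 - ringAGen 0 ^ 2) * Polynomial.X - Polynomial.C (ringAGen 1 ^ 2)),
      by monicity!, ?_⟩
  have hgen : ∀ i, algebraMap ringA S3 (ringAGen i) = av i := fun _ => rfl
  simp only [Polynomial.eval₂_add, Polynomial.eval₂_sub, Polynomial.eval₂_mul,
    Polynomial.eval₂_neg, Polynomial.eval₂_pow, Polynomial.eval₂_X, Polynomial.eval₂_C,
    map_sub, map_pow, hgen]
  have hcubic := X_sq_cubic s
  simp only [av, Matrix.cons_val]
  linear_combination hcubic

theorem algebraicIndependent_av : AlgebraicIndependent F3 av :=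
  algebraicIndependent_of_isAlgebraic_X fun s => (isIntegral_X s).isAlgebraic

/-! ### The invariant two-forms `d₁, …, d₆` -/

/-- Coordinates of `d₁`, `d₂`, `d₃`. -/
noncomputable def dLow : Fin 3 → Fin 3 → S3 :=
  ![X, fun s => X (s + 1) * X (s + 2), fun s => X s ^ 3]

/-- Coordinates of `d₁`, …, `d₆`, those of `d₄`, `d₅`, `d₆` being the multiples of those of `d₁`,
`d₂`, `d₃` by `x₂²`, `x₃²`, `x₁²`. -/
noncomputable def dCoord : Fin 6 → Fin 3 → S3 :=
  Fin.append (m := 3) (n := 3) dLow fun i s => X (s + 1) ^ 2 * dLow i s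

theorem dvec_eq_twoForm (i : Fin 6) : dvec i = twoForm (dCoord i) := by
  rw [twoForm_eq]
  fin_cases i
  · rfl
  · rfl
  · rfl
  · change d4 = (X 1 ^ 2 * X 0) ⊗ₜ _ + (X 2 ^ 2 * X 1) ⊗ₜ _ + (X 0 ^ 2 * X 2) ⊗ₜ _
    simp only [d4, mul_comm]
  · change d5 = (X 1 ^ 2 * (X 1 * X 2)) ⊗ₜ _ + (X 2 ^ 2 * (X 2 * X 0)) ⊗ₜ _ +
      (X 0 ^ 2 * (X 0 * X 1)) ⊗ₜ _
    simp only [d5, ← mul_assoc, ← pow_succ]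
  · change d6 = (X 1 ^ 2 * X 0 ^ 3) ⊗ₜ _ + (X 2 ^ 2 * X 1 ^ 3) ⊗ₜ _ + (X 0 ^ 2 * X 2 ^ 3) ⊗ₜ _
    simp only [d6, mul_comm]

/-- The isomorphism `p ↦ p(a₁, a₂, a₃)` from the polynomial ring to `A`. -/
noncomputable def ringAEquiv : MvPolynomial (Fin 3) F3 ≃ₐ[F3] ringA :=
  algebraicIndependent_av.aevalEquiv

theorem aeval_av_mul_eq_smul (p : MvPolynomial (Fin 3) F3) (f : S3) :
    aeval av p * f = ringAEquiv p • f :=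
  congrArg (· * f) (algebraicIndependent_av.algebraMap_aevalEquiv p).symm

theorem Phi11_eq_twoForm (p : Fin 6 → MvPolynomial (Fin 3) F3) :
    Phi11 p = twoForm fun s => ∑ i, ringAEquiv (p i) • dCoord i s := by
  simp only [Phi11, dvec_eq_twoForm, twoForm, Finset.mul_sum,
    Algebra.TensorProduct.tmul_mul_tmul, one_mul, TensorProduct.sum_tmul, ← aeval_av_mul_eq_smul]
  exact Finset.sum_comm

namespace IsSignedShift

variable {g : G3} {k : Fin 3} {ε : Fin 3 → F3}

theorem actS_dLow (h : IsSignedShift g k ε) (i s : Fin 3) :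
    actS g (dLow i s) = ε s • dLow i (s + k) := by
  fin_cases i
  · exact h.actS_X s
  · change actS g (X (s + 1) * X (s + 2)) = ε s • (X (s + k + 1) * X (s + k + 2))
    rw [map_mul, h.actS_X, h.actS_X, smul_mul_smul_comm, h.mul_eq, add_right_comm s 1 k,
      add_right_comm s 2 k]
  · change actS g (X s ^ 3) = ε s • X (s + k) ^ 3
    rw [map_pow, h.actS_X, smul_pow, pow_succ, sq, h.mul_self, one_mul]

theorem actS_dCoord (h : IsSignedShift g k ε) (i : Fin 6) (s : Fin 3) :
    actS g (dCoord i s) = ε s • dCoord i (s + k) := by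
  induction i using Fin.addCases (m := 3) (n := 3) with
  | left i => simpa only [dCoord, Fin.append_left] using h.actS_dLow i s
  | right i =>
    simp only [dCoord, Fin.append_right, map_mul, h.actS_X_sq, h.actS_dLow, mul_smul_comm,
      add_right_comm s 1 k]

end IsSignedShift

theorem actS_smul (g : G3) (a : ringA) (f : S3) : actS g (a • f) = a • actS g f := by
  rw [Subalgebra.smul_def, Subalgebra.smul_def, smul_eq_mul, smul_eq_mul, map_mul,
    actS_of_mem_ringA g a.2]

theorem actR_Phi11 (g : G3) (p : Fin 6 → MvPolynomial (Fin 3) F3) :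
    actR g (Phi11 p) = Phi11 p := by
  obtain ⟨k, ε, h⟩ := exists_isSignedShift g
  rw [Phi11_eq_twoForm, h.actR_twoForm_eq_self_iff]
  intro s
  simp only [map_sum, actS_smul, h.actS_dCoord, Finset.smul_sum]
  exact Finset.sum_congr rfl fun i _ => smul_comm _ _ _

/-! ### Linear independence -/

theorem linearIndependent_dLow : LinearIndependent ringA fun i => dLow i 0 := by
  refine Fintype.linearIndependent_iff.2 fun c hc => ?_
  have hc' : (c 0 : S3) * X 0 + (c 1 : S3) * (X 1 * X 2) + (c 2 : S3) * X 0 ^ 3 = 0 := by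
    rw [Fin.sum_univ_three] at hc
    exact hc
  have hsymm : ∀ i, (c i : S3).IsSymmetric := fun i => isSymmetric_of_mem_ringA (c i).2
  -- The relation multiplied by `x₁` is a polynomial in `x₁²`, since `x₁ · x₂x₃ = a₂`.
  have hzero : ![(c 1 * a2 : S3), c 0, c 2] = 0 := by
    refine eq_zero_of_sum_isSymmetric_mul_X_pow (Function.Embedding.refl _) two_ne_zero
      (s := (0 : Fin 3)) (fun i => ?_) ?_
    · match i with
      | 0 => exact (hsymm 1).mul (av_isSymmetric 1)
      | 1 => exact hsymm 0
      | 2 => exact hsymm 2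
    · rw [Fin.sum_univ_three]
      simp only [Matrix.cons_val, a2, Fin.val_zero, Fin.val_one, Fin.val_two]
      linear_combination X 0 * hc'
  have ha2 : a2 ≠ 0 := by simp [a2, X_ne_zero]
  intro i
  apply Subtype.ext
  match i with
  | 0 => exact congrFun hzero 1
  | 1 => exact (mul_eq_zero.1 (congrFun hzero 0)).resolve_right ha2
  | 2 => exact congrFun hzero 2

/-- The `A`-span of the first coordinates of `d₁`, `d₂`, `d₃`. -/
noncomputable def lowSpan : Submodule ringA S3 :=
  Submodule.span ringA (Set.range fun i => dLow i 0)

theorem dLow_mem_lowSpan (i : Fin 3) : dLow i 0 ∈ lowSpan := Submodule.subset_span ⟨i, rfl⟩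

theorem rename_swap_of_mem_lowSpan {f : S3} (hf : f ∈ lowSpan) :
    rename (Equiv.swap 1 2) f = f := by
  induction hf using Submodule.span_induction with
  | mem f hf =>
    obtain ⟨i, rfl⟩ := hf
    have h0 : Equiv.swap (1 : Fin 3) 2 0 = 0 := by decide
    fin_cases i <;> simp [dLow, h0, mul_comm]
  | zero => exact map_zero _
  | add f f' _ _ hf hf' => rw [map_add, hf, hf']
  | smul a f _ hf =>
    rw [Subalgebra.smul_def, smul_eq_mul, map_mul, hf, isSymmetric_of_mem_ringA a.2]

theorem eq_zero_of_add_X_sq_mul_eq_zero {u v : S3} (hu : u ∈ lowSpan) (hv : v ∈ lowSpan)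
    (h : u + X 1 ^ 2 * v = 0) : u = 0 ∧ v = 0 := by
  have hswap : u + X 2 ^ 2 * v = 0 := by
    simpa [rename_swap_of_mem_lowSpan hu, rename_swap_of_mem_lowSpan hv]
      using congrArg (rename (Equiv.swap (1 : Fin 3) 2)) h
  have hne : (X 1 ^ 2 - X 2 ^ 2 : S3) ≠ 0 :=
    sub_ne_zero.2 ((X_pow_injective two_ne_zero).ne (by decide))
  have hv0 : v = 0 := (mul_eq_zero.1 (by linear_combination h - hswap)).resolve_left hne
  exact ⟨by simpa [hv0] using h, hv0⟩

theorem sum_smul_dCoord (c : Fin 6 → ringA) : ∑ i, c i • dCoord i 0 =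
    ∑ i, c (Fin.castAdd 3 i) • dLow i 0 + X 1 ^ 2 * ∑ i, c (Fin.natAdd 3 i) • dLow i 0 := by
  rw [Fin.sum_univ_add (a := 3) (b := 3), Finset.mul_sum]
  simp only [dCoord, Fin.append_left, Fin.append_right, zero_add, mul_smul_comm]

theorem linearIndependent_dCoord : LinearIndependent ringA fun i => dCoord i 0 := by
  refine Fintype.linearIndependent_iff.2 fun c hc => ?_
  have hmem : ∀ c : Fin 3 → ringA, ∑ i, c i • dLow i 0 ∈ lowSpan := fun c =>
    sum_mem fun i _ => lowSpan.smul_mem _ (dLow_mem_lowSpan i)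
  rw [sum_smul_dCoord] at hc
  obtain ⟨hu, hv⟩ := eq_zero_of_add_X_sq_mul_eq_zero (hmem _) (hmem _) hc
  have hLow := Fintype.linearIndependent_iff.1 linearIndependent_dLow
  intro i
  induction i using Fin.addCases (m := 3) (n := 3) with
  | left i => exact hLow _ hu i
  | right i => exact hLow _ hv i

theorem Phi11_injective : Function.Injective Phi11 := by
  intro p q h
  rw [Phi11_eq_twoForm, Phi11_eq_twoForm] at h
  have hcoord : ∀ i, ringAEquiv (p i) = ringAEquiv (q i) :=
    Fintype.linearIndependent_iffₛ.1 linearIndependent_dCoord _ _ (congrFun (twoForm_injective h) 0)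
  funext i
  exact ringAEquiv.injective (hcoord i)

/-! ### Spanning -/

/-- The `A`-span of the first coordinates of `d₁`, …, `d₆`. -/
noncomputable def dSpan : Submodule ringA S3 :=
  Submodule.span ringA (Set.range fun i => dCoord i 0)

theorem mem_dSpan_iff {f : S3} :
    f ∈ dSpan ↔ ∃ u ∈ lowSpan, ∃ v ∈ lowSpan, u + X 1 ^ 2 * v = f := by
  simp only [dSpan, lowSpan, Submodule.mem_span_range_iff_exists_fun, sum_smul_dCoord]
  constructor
  · rintro ⟨c, hc⟩
    exact ⟨_, ⟨_, rfl⟩, _, ⟨_, rfl⟩, hc⟩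
  · rintro ⟨_, ⟨c, rfl⟩, _, ⟨c', rfl⟩, hf⟩
    refine ⟨Fin.append (m := 3) (n := 3) c c', ?_⟩
    simpa only [Fin.append_left, Fin.append_right] using hf

theorem mul_mem_of_mem_ringA {N : Submodule ringA S3} {a f : S3} (ha : a ∈ ringA) (hf : f ∈ N) :
    a * f ∈ N := N.smul_mem ⟨a, ha⟩ hf

theorem X_zero_sq_mul_mem_lowSpan {f : S3} (hf : f ∈ lowSpan) : X 0 ^ 2 * f ∈ lowSpan := by
  have hle : lowSpan ≤ lowSpan.comap (LinearMap.mulLeft ringA (X 0 ^ 2)) := by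
    refine Submodule.span_le.2 (Set.range_subset_iff.2 fun i => ?_)
    change X 0 ^ 2 * dLow i 0 ∈ lowSpan
    match i with
    | 0 =>
      have h : X 0 ^ 2 * dLow 0 0 = dLow 2 0 := (pow_succ _ _).symm
      exact h ▸ dLow_mem_lowSpan 2
    | 1 =>
      have h : X 0 ^ 2 * dLow 1 0 = av 1 * dLow 0 0 := by
        change X 0 ^ 2 * (X 1 * X 2) = X 0 * X 1 * X 2 * X 0
        ring
      exact h ▸ mul_mem_of_mem_ringA (av_mem_ringA 1) (dLow_mem_lowSpan 0)
    | 2 =>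
      have h : X 0 ^ 2 * dLow 2 0 =
          av 0 * dLow 2 0 - (av 2 - av 0 ^ 2) * dLow 0 0 + av 1 * dLow 1 0 := by
        change X 0 ^ 2 * X 0 ^ 3 = a1 * X 0 ^ 3 - (a3 - a1 ^ 2) * X 0 + a2 * (X 1 * X 2)
        rw [← sum_X_sq_mul_X_sq, a1, a2]
        ring
      rw [h]
      exact add_mem (sub_mem (mul_mem_of_mem_ringA (av_mem_ringA 0) (dLow_mem_lowSpan 2))
        (mul_mem_of_mem_ringA (sub_mem (av_mem_ringA 2) (pow_mem (av_mem_ringA 0) 2))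
          (dLow_mem_lowSpan 0)))
        (mul_mem_of_mem_ringA (av_mem_ringA 1) (dLow_mem_lowSpan 1))
  exact hle hf

theorem lowSpan_le_dSpan : lowSpan ≤ dSpan := fun u hu =>
  mem_dSpan_iff.2 ⟨u, hu, 0, zero_mem _, by rw [mul_zero, add_zero]⟩

theorem X_zero_sq_mul_mem_dSpan {f : S3} (hf : f ∈ dSpan) : X 0 ^ 2 * f ∈ dSpan := by
  obtain ⟨u, hu, v, hv, rfl⟩ := mem_dSpan_iff.1 hf
  exact mem_dSpan_iff.2 ⟨_, X_zero_sq_mul_mem_lowSpan hu, _, X_zero_sq_mul_mem_lowSpan hv, by ring⟩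

theorem X_one_sq_mul_mem_dSpan {f : S3} (hf : f ∈ dSpan) : X 1 ^ 2 * f ∈ dSpan := by
  obtain ⟨u, hu, v, hv, rfl⟩ := mem_dSpan_iff.1 hf
  have hv' := X_zero_sq_mul_mem_lowSpan hv
  have ha1 : ∀ {w}, w ∈ lowSpan → a1 * w ∈ lowSpan := mul_mem_of_mem_ringA (av_mem_ringA 0)
  have ha3 : (a3 - a1 ^ 2) * v ∈ lowSpan :=
    mul_mem_of_mem_ringA (sub_mem (av_mem_ringA 2) (pow_mem (av_mem_ringA 0) 2)) hv
  refine mem_dSpan_iff.2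
    ⟨a1 * (X 0 ^ 2 * v) - X 0 ^ 2 * (X 0 ^ 2 * v) - (a3 - a1 ^ 2) * v,
      sub_mem (sub_mem (ha1 hv') (X_zero_sq_mul_mem_lowSpan hv')) ha3,
      u + (a1 * v - X 0 ^ 2 * v), add_mem hu (sub_mem (ha1 hv) hv'), ?_⟩
  rw [← sum_X_sq_mul_X_sq, a1]
  ring

theorem X_sq_mul_mem_dSpan (s : Fin 3) {f : S3} (hf : f ∈ dSpan) : X s ^ 2 * f ∈ dSpan := by
  match s with
  | 0 => exact X_zero_sq_mul_mem_dSpan hf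
  | 1 => exact X_one_sq_mul_mem_dSpan hf
  | 2 =>
    have h : X 2 ^ 2 * f = a1 * f - X 0 ^ 2 * f - X 1 ^ 2 * f := by rw [a1]; ring
    rw [h]
    exact sub_mem (sub_mem (mul_mem_of_mem_ringA (av_mem_ringA 0) hf)
      (X_zero_sq_mul_mem_dSpan hf)) (X_one_sq_mul_mem_dSpan hf)

theorem expand_two_mul_mem_dSpan (p : S3) {f : S3} (hf : f ∈ dSpan) : expand 2 p * f ∈ dSpan := by
  induction p using MvPolynomial.induction_on generalizing f with
  | C r =>
    rw [expand_C]
    exact mul_mem_of_mem_ringA (ringA.algebraMap_mem r) hf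
  | add p q hp hq => rw [map_add, add_mul]; exact add_mem (hp hf) (hq hf)
  | mul_X p s hp => rw [map_mul, expand_X, mul_assoc]; exact hp (X_sq_mul_mem_dSpan s hf)

theorem monomial_mem_dSpan (m : Fin 3 →₀ ℕ) (a : F3) (h12 : Even (m 1 + m 2))
    (h01 : Odd (m 0 + m 1)) : monomial m a ∈ dSpan := by
  rw [monomial_eq_expand_mul 2 m a]
  refine expand_two_mul_mem_dSpan _ (lowSpan_le_dSpan ?_)
  rw [monomial_eq, Finsupp.prod_fintype _ _ fun _ => pow_zero _, Fin.prod_univ_three, C_1, one_mul]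
  simp only [Finsupp.mapRange_apply]
  rcases Nat.even_or_odd (m 0) with h0 | h0
  · have h1 : Odd (m 1) := by grind
    have h2 : Odd (m 2) := by grind
    rw [Nat.even_iff.1 h0, Nat.odd_iff.1 h1, Nat.odd_iff.1 h2, pow_zero, pow_one, pow_one, one_mul]
    exact dLow_mem_lowSpan 1
  · have h1 : Even (m 1) := by grind
    have h2 : Even (m 2) := by grind
    rw [Nat.odd_iff.1 h0, Nat.even_iff.1 h1, Nat.even_iff.1 h2, pow_zero, pow_zero, pow_one,
      mul_one, mul_one]
    exact dLow_mem_lowSpan 0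

theorem IsSignedShift.coeff_actS {g : G3} {ε : Fin 3 → F3} (h : IsSignedShift g 0 ε) (f : S3)
    (m : Fin 3 →₀ ℕ) : coeff m (actS g f) = (∏ s, ε s ^ m s) * coeff m f := by
  have hact : actS g = aeval fun s => C (ε s) * X s :=
    algHom_ext fun s => by rw [h.actS_X, add_zero, aeval_X, smul_eq_C_mul]
  rw [hact, coeff_aeval_C_mul_X, Finsupp.prod_fintype _ _ fun _ => pow_zero _]

theorem mem_dSpan_of_actS {f : S3} (hi : actS im f = f) (hj : actS jm f = -f) : f ∈ dSpan := by
  have hneg : ∀ c : F3, -c = c → c = 0 := by decide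
  rw [f.as_sum]
  refine sum_mem fun m hm => monomial_mem_dSpan m _ ?_ ?_
  · have h : coeff m f = (-1) ^ (m 1 + m 2) * coeff m f := by
      simpa [hi, Fin.prod_univ_three, ← pow_add] using isSignedShift_im.coeff_actS f m
    by_contra hodd
    rw [(Nat.not_even_iff_odd.1 hodd).neg_one_pow, neg_one_mul] at h
    exact mem_support_iff.1 hm (hneg _ h.symm)
  · have h : -coeff m f = (-1) ^ (m 0 + m 1) * coeff m f := by
      simpa [hj, Fin.prod_univ_three, ← pow_add] using isSignedShift_jm.coeff_actS f m
    by_contra heven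
    rw [(Nat.not_odd_iff_even.1 heven).neg_one_pow, one_mul] at h
    exact mem_support_iff.1 hm (hneg _ h)

theorem exists_Phi11_eq {f : Fin 3 → S3} (hf : ∀ g, actR g (twoForm f) = twoForm f) :
    ∃ p, Phi11 p = twoForm f := by
  have hi : actS im (f 0) = f 0 := by
    simpa using (isSignedShift_im.actR_twoForm_eq_self_iff f).1 (hf im) 0
  have hj : actS jm (f 0) = -f 0 := by
    simpa using (isSignedShift_jm.actR_twoForm_eq_self_iff f).1 (hf jm) 0
  obtain ⟨c, hc⟩ := (Submodule.mem_span_range_iff_exists_fun ringA).1 (mem_dSpan_of_actS hi hj)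
  refine ⟨fun i => ringAEquiv.symm (c i), ?_⟩
  have hinv := actR_Phi11 tm fun i => ringAEquiv.symm (c i)
  simp only [Phi11_eq_twoForm, AlgEquiv.apply_symm_apply] at hinv ⊢
  exact twoForm_ext_of_actR_tm hinv (hf tm) hc

/-- The `G`-invariant `2`-forms form a free `A`-module with basis `{d₁, …, d₆}`: the map
`(p₁,…,p₆) ↦ ∑ᵢ pᵢ(a₁,a₂,a₃)·dᵢ` is injective, with image exactly the set of `G`-fixed
elements of `R` of the form `f₁y₂y₃ + f₂y₃y₁ + f₃y₁y₂`. -/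
theorem stmt11 :
    Function.Injective Phi11 ∧
    Set.range Phi11 = twoForms ∩ {z : Rf | ∀ g : G3, actR g z = z} := by
  refine ⟨Phi11_injective, Set.Subset.antisymm ?_ ?_⟩
  · rintro _ ⟨p, rfl⟩
    exact ⟨range_twoForm ▸ ⟨_, (Phi11_eq_twoForm p).symm⟩, fun g => actR_Phi11 g p⟩
  · rintro z ⟨hz, hinv⟩
    obtain ⟨f, rfl⟩ := range_twoForm.symm ▸ hz
    exact exists_Phi11_eq hinv
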